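/- Let f: ℝ → [0,∞] be measurable and nowhere locally square-integrable, i.e. ∫_I f² = ∞ for every nonempty open interval I (for instance f(x) = Σ_{n=1}^∞ (1/n!)|x − r_n|^{−1/2} with (r_n) an enumeration of the rationals). If ψ: ℝ → ℂ is continuous and fψ ∈ L²(ℝ), then ψ = 0. Consequently, since H¹(ℝ) embeds into the continuous functions, the domain intersection D(p) ∩ D(M_f) = H¹(ℝ) ∩ {ψ ∈ L²(ℝ) : fψ ∈ L²(ℝ)} is the zero subspace. -/

import Mathlib

noncomputable section

open MeasureTheory Complex

/-- `L²(ℝ)`. -/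
abbrev L2R : Type := Lp ℂ 2 (volume : Measure ℝ)

/-- Graph characterization of the momentum operator `p = −i d/dx` with domain the first Sobolev
space `H¹(ℝ)`: `g = p f` iff `ig` is the weak derivative of `f`, i.e.
`∫ f φ' = −∫ (i g) φ` for every Schwartz function `φ`. -/
def IsMomentum (P : L2R →ₗ.[ℂ] L2R) : Prop :=
  ∀ f g : L2R, (f, g) ∈ P.graph ↔
    ∀ φ : SchwartzMap ℝ ℂ,
      ∫ x : ℝ, f x * deriv (⇑φ) x = -∫ x : ℝ, Complex.I * g x * φ x

open Filter Topology Set ContinuousLinearMap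
open scoped ContDiff Convolution

/-- The convolution of `ρ` with the indicator of the interval with endpoints `a` and `b`. -/
def smoothedIndicator (ρ : ℝ → ℝ) (a b x : ℝ) : ℝ := ∫ t in (a - x)..(b - x), ρ t

theorem hasDerivAt_smoothedIndicator {ρ : ℝ → ℝ} (hρ : Continuous ρ) (a b x : ℝ) :
    HasDerivAt (smoothedIndicator ρ a b) (ρ (a - x) - ρ (b - x)) x := by
  have key (c : ℝ) : HasDerivAt (fun y ↦ ∫ t in (0 : ℝ)..(c - y), ρ t) (-ρ (c - x)) x := by
    simpa [Function.comp_def] using! (intervalIntegral.integral_hasDerivAt_right (hρ.intervalIntegrable 0 (c - x))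
      hρ.stronglyMeasurable.stronglyMeasurableAtFilter hρ.continuousAt).scomp x
        ((hasDerivAt_id x).const_sub c)
  have heq : smoothedIndicator ρ a b =
      fun y ↦ (∫ t in (0 : ℝ)..(b - y), ρ t) - ∫ t in (0 : ℝ)..(a - y), ρ t := by
    ext y
    exact (intervalIntegral.integral_interval_sub_left (hρ.intervalIntegrable _ _)
      (hρ.intervalIntegrable _ _)).symm
  rw [heq]
  exact ((key b).sub (key a)).congr_deriv (by ring)

theorem deriv_smoothedIndicator {ρ : ℝ → ℝ} (hρ : Continuous ρ) (a b : ℝ) :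
    deriv (smoothedIndicator ρ a b) = fun x ↦ ρ (a - x) - ρ (b - x) :=
  funext fun x ↦ (hasDerivAt_smoothedIndicator hρ a b x).deriv

theorem contDiff_smoothedIndicator {ρ : ℝ → ℝ} (hρ : ContDiff ℝ ∞ ρ) (a b : ℝ) :
    ContDiff ℝ ∞ (smoothedIndicator ρ a b) := by
  rw [contDiff_infty_iff_deriv, deriv_smoothedIndicator hρ.continuous]
  exact ⟨fun x ↦ (hasDerivAt_smoothedIndicator hρ.continuous a b x).differentiableAt, by fun_prop⟩

theorem smoothedIndicator_eq_zero {ρ : ℝ → ℝ} {r : ℝ} (hρ : ∀ t, r ≤ |t| → ρ t = 0)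
    {a b x : ℝ} (hab : a ≤ b) (hx : x ≤ a - r ∨ b + r ≤ x) : smoothedIndicator ρ a b x = 0 := by
  refine intervalIntegral.integral_zero_ae (Eventually.of_forall fun t ht ↦ hρ t ?_)
  rw [uIoc_of_le (by linarith)] at ht
  rcases hx with hx | hx
  · exact le_trans (by linarith [ht.1]) (le_abs_self t)
  · exact le_trans (by linarith [ht.2]) (neg_le_abs t)

theorem smoothedIndicator_eq_integral {ρ : ℝ → ℝ} {r : ℝ} (hρ : ∀ t, r ≤ |t| → ρ t = 0)
    {a b x : ℝ} (hax : a + r ≤ x) (hxb : x ≤ b - r) : smoothedIndicator ρ a b x = ∫ t, ρ t := by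
  refine intervalIntegral.integral_eq_integral_of_support_subset fun t ht ↦ ?_
  have : |t| < r := lt_of_not_ge fun h ↦ ht (hρ t h)
  rw [abs_lt] at this
  constructor <;> linarith

theorem abs_smoothedIndicator_le {ρ : ℝ → ℝ} (hρ : Integrable ρ) (hρ0 : ∀ t, 0 ≤ ρ t)
    {a b : ℝ} (hab : a ≤ b) (x : ℝ) : |smoothedIndicator ρ a b x| ≤ ∫ t, ρ t := by
  have hle : a - x ≤ b - x := by linarith
  rw [smoothedIndicator, abs_of_nonneg (intervalIntegral.integral_nonneg hle fun t _ ↦ hρ0 t),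
    intervalIntegral.integral_of_le hle]
  exact setIntegral_le_integral hρ (Eventually.of_forall hρ0)

theorem hasCompactSupport_smoothedIndicator {ρ : ℝ → ℝ} {r : ℝ} (hρ : ∀ t, r ≤ |t| → ρ t = 0)
    {a b : ℝ} (hab : a ≤ b) : HasCompactSupport (smoothedIndicator ρ a b) := by
  refine HasCompactSupport.intro (isCompact_Icc (a := a - r) (b := b + r)) fun x hx ↦ ?_
  refine smoothedIndicator_eq_zero hρ hab ?_
  by_contra! h
  exact hx ⟨h.1.le, h.2.le⟩

/-- If `h` is the weak derivative of `u`, the increments of a mollification of `u` are the integrals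
of `h` against smoothed indicators of intervals. -/
theorem convolution_sub_convolution_of_weakDeriv {u h : ℝ → ℂ} (hu : LocallyIntegrable u)
    (huh : ∀ φ : SchwartzMap ℝ ℂ, ∫ x, u x * deriv φ x = -∫ x, h x * φ x)
    {ρ : ℝ → ℝ} (hρ : ContDiff ℝ ∞ ρ) (hρc : HasCompactSupport ρ) {r : ℝ}
    (hρr : ∀ t, r ≤ |t| → ρ t = 0) {a b : ℝ} (hab : a ≤ b) :
    (ρ ⋆[lsmul ℝ ℝ, volume] u) b - (ρ ⋆[lsmul ℝ ℝ, volume] u) a =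
      ∫ x, smoothedIndicator ρ a b x • h x := by
  have hint (c : ℝ) : Integrable fun t ↦ ρ (c - t) • u t :=
    hu.integrable_smul_left_of_hasCompactSupport (hρ.continuous.comp (by fun_prop))
      (hρc.comp_homeomorph (Homeomorph.subLeft c))
  have hφc : HasCompactSupport fun x ↦ (smoothedIndicator ρ a b x : ℂ) :=
    (hasCompactSupport_smoothedIndicator hρr hab).comp_left (g := ((↑) : ℝ → ℂ)) ofReal_zero
  have hφs : ContDiff ℝ ∞ fun x ↦ (smoothedIndicator ρ a b x : ℂ) :=
    ofRealCLM.contDiff.comp (contDiff_smoothedIndicator hρ a b)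
  have hderiv (x : ℝ) : deriv (hφc.toSchwartzMap hφs) x = (ρ (a - x) - ρ (b - x) : ℝ) :=
    (hasDerivAt_smoothedIndicator hρ.continuous a b x).ofReal_comp.deriv
  have key := huh (hφc.toSchwartzMap hφs)
  simp only [hderiv] at key
  calc _ = -∫ x, u x * (ρ (a - x) - ρ (b - x) : ℝ) := by
        rw [convolution_lsmul_swap, convolution_lsmul_swap, ← integral_sub (hint b) (hint a),
          ← integral_neg]
        congr 1 with x
        simp only [real_smul]
        push_cast
        ring
    _ = _ := by
        rw [key, neg_neg]
        congr 1 with x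
        exact mul_comm _ _

theorem tendsto_integral_smoothedIndicator {h : ℝ → ℂ} (hh : LocallyIntegrable h)
    {ρ : ℕ → ℝ → ℝ} {r : ℕ → ℝ} (hr : Tendsto r atTop (𝓝 0)) (hρc : ∀ n, Continuous (ρ n))
    (hρi : ∀ n, Integrable (ρ n)) (hρ0 : ∀ n t, 0 ≤ ρ n t) (hρ1 : ∀ n, ∫ t, ρ n t = 1)
    (hρr : ∀ n t, r n ≤ |t| → ρ n t = 0) {a b : ℝ} (hab : a ≤ b) :
    Tendsto (fun n ↦ ∫ x, smoothedIndicator (ρ n) a b x • h x) atTop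
      (𝓝 (∫ x in a..b, h x)) := by
  have hlim : ∫ x in a..b, h x = ∫ x, (Ioc a b).indicator h x := by
    rw [intervalIntegral.integral_of_le hab, integral_indicator measurableSet_Ioc]
  rw [hlim]
  refine tendsto_integral_filter_of_dominated_convergence
    ((Icc (a - 1) (b + 1)).indicator fun x ↦ ‖h x‖) ?_ ?_ ?_ ?_
  · refine Eventually.of_forall fun n ↦ AEStronglyMeasurable.fun_smul ?_ hh.aestronglyMeasurable
    exact (continuous_iff_continuousAt.2 fun x ↦
      (hasDerivAt_smoothedIndicator (hρc n) a b x).continuousAt).aestronglyMeasurable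
  · filter_upwards [hr.eventually (gt_mem_nhds one_pos)] with n hn
    refine Eventually.of_forall fun x ↦ ?_
    by_cases hx : x ∈ Icc (a - 1) (b + 1)
    · rw [indicator_of_mem hx, norm_smul, Real.norm_eq_abs]
      exact mul_le_of_le_one_left (norm_nonneg _)
        ((abs_smoothedIndicator_le (hρi n) (hρ0 n) hab x).trans (hρ1 n).le)
    · rw [indicator_of_notMem hx, smoothedIndicator_eq_zero (hρr n) hab, zero_smul, norm_zero]
      by_contra! hcon
      exact hx ⟨by linarith, by linarith⟩
  · exact (integrable_indicator_iff measurableSet_Icc).2 (hh.integrableOn_isCompact isCompact_Icc).norm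
  · filter_upwards [Measure.ae_ne volume a, Measure.ae_ne volume b] with x hxa hxb
    refine tendsto_nhds_of_eventually_eq ?_
    by_cases hx : x ∈ Ioc a b
    · have hxb' := lt_of_le_of_ne hx.2 hxb
      filter_upwards [hr.eventually (gt_mem_nhds (sub_pos.2 hx.1)),
        hr.eventually (gt_mem_nhds (sub_pos.2 hxb'))] with n hn₁ hn₂
      rw [smoothedIndicator_eq_integral (hρr n) (by linarith) (by linarith), hρ1, one_smul,
        indicator_of_mem hx]
    · have hx' : x < a ∨ b < x := by
        by_contra! hcon
        exact hx ⟨lt_of_le_of_ne hcon.1 hxa.symm, hcon.2⟩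
      rw [indicator_of_notMem hx]
      rcases hx' with hx' | hx'
      · filter_upwards [hr.eventually (gt_mem_nhds (sub_pos.2 hx'))] with n hn
        rw [smoothedIndicator_eq_zero (hρr n) hab (Or.inl (by linarith)), zero_smul]
      · filter_upwards [hr.eventually (gt_mem_nhds (sub_pos.2 hx'))] with n hn
        rw [smoothedIndicator_eq_zero (hρr n) hab (Or.inr (by linarith)), zero_smul]

/-- A locally integrable function on the line with locally integrable weak derivative is almost
everywhere equal to a continuous function. -/
theorem exists_continuous_ae_eq_of_weakDeriv {u h : ℝ → ℂ} (hu : LocallyIntegrable u)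
    (hh : LocallyIntegrable h)
    (huh : ∀ φ : SchwartzMap ℝ ℂ, ∫ x, u x * deriv φ x = -∫ x, h x * φ x) :
    ∃ v : ℝ → ℂ, Continuous v ∧ u =ᵐ[volume] v := by
  let B (n : ℕ) : ContDiffBump (0 : ℝ) :=
    ⟨1 / ((n : ℝ) + 1), 2 * (1 / ((n : ℝ) + 1)), by positivity,
      lt_mul_of_one_lt_left (by positivity) one_lt_two⟩
  have hr : Tendsto (fun n ↦ (B n).rOut) atTop (𝓝 0) := by
    simpa [B] using tendsto_one_div_add_atTop_nhds_zero_nat.const_mul (2 : ℝ)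
  have hB (n : ℕ) (t : ℝ) (ht : (B n).rOut ≤ |t|) : (B n).normed volume t = 0 := by
    rw [← Function.notMem_support, (B n).support_normed_eq]
    simpa using ht
  have hae := ContDiffBump.ae_convolution_tendsto_right_of_locallyIntegrable (μ := volume)
    (K := 2) hr (Eventually.of_forall fun n ↦ le_rfl) hu
  have key {a b : ℝ} (hab : a ≤ b)
      (ha : Tendsto (fun n ↦ ((B n).normed volume ⋆[lsmul ℝ ℝ, volume] u) a) atTop (𝓝 (u a)))
      (hb : Tendsto (fun n ↦ ((B n).normed volume ⋆[lsmul ℝ ℝ, volume] u) b) atTop (𝓝 (u b))) :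
      u b - u a = ∫ x in a..b, h x := by
    refine tendsto_nhds_unique (hb.sub ha) ?_
    simp_rw [convolution_sub_convolution_of_weakDeriv hu huh (B _).contDiff_normed
      (B _).hasCompactSupport_normed (hB _) hab]
    exact tendsto_integral_smoothedIndicator hh hr (fun n ↦ (B n).continuous_normed)
      (fun n ↦ (B n).integrable_normed) (fun n ↦ (B n).nonneg_normed)
      (fun n ↦ (B n).integral_normed) hB hab
  obtain ⟨a, ha⟩ := hae.exists
  refine ⟨fun x ↦ u a + ∫ t in a..x, h t, continuous_const.add
    (intervalIntegral.continuous_primitive (fun c d ↦ ?_) a), ?_⟩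
  · exact (hh.integrableOn_isCompact isCompact_uIcc).intervalIntegrable
  · filter_upwards [hae] with x hx
    rcases le_total a x with hax | hax
    · rw [← key hax ha hx]
      ring
    · rw [intervalIntegral.integral_symm, ← key hax hx ha]
      ring

theorem eq_zero_of_continuous_of_lintegral_mul_sq_lt_top {f : ℝ → ENNReal}
    (hf2 : ∀ a b : ℝ, a < b → ∫⁻ x in Set.Ioc a b, (f x) ^ 2 ∂volume = ⊤)
    {ψ : ℝ → ℂ} (hψ : Continuous ψ)
    (hfψ : (∫⁻ x : ℝ, (f x * (‖ψ x‖₊ : ENNReal)) ^ 2 ∂volume) < ⊤) : ψ = 0 := by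
  by_contra hne
  obtain ⟨x₀, hx₀⟩ := Function.ne_iff.1 hne
  obtain ⟨c, hc, hcx⟩ := exists_between (nnnorm_pos.2 hx₀)
  obtain ⟨ε, hε, hball⟩ := Metric.eventually_nhds_iff.1
    (hψ.nnnorm.continuousAt.eventually (lt_mem_nhds hcx))
  refine hfψ.ne (top_le_iff.1 ?_)
  calc (⊤ : ENNReal) = (c : ENNReal) ^ 2 * ∫⁻ x in Ioc x₀ (x₀ + ε / 2), (f x) ^ 2 := by
        rw [hf2 _ _ (by linarith), ENNReal.mul_top (by simpa using hc.ne')]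
    _ = ∫⁻ x in Ioc x₀ (x₀ + ε / 2), (c : ENNReal) ^ 2 * (f x) ^ 2 :=
        (lintegral_const_mul' _ _ (by finiteness)).symm
    _ ≤ ∫⁻ x in Ioc x₀ (x₀ + ε / 2), (f x * (‖ψ x‖₊ : ENNReal)) ^ 2 := by
        refine setLIntegral_mono' measurableSet_Ioc fun x hx ↦ ?_
        rw [← mul_pow, mul_comm]
        have hlt : c < ‖ψ x‖₊ := hball (by
          rw [Real.dist_eq, abs_lt]
          constructor <;> linarith [hx.1, hx.2])
        gcongr
    _ ≤ _ := setLIntegral_le_lintegral _ _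

/-- If `f : ℝ → [0,∞]` is measurable and nowhere locally square-integrable,
then any continuous `ψ` with `fψ ∈ L²` vanishes; consequently the domain intersection
`D(p) ∩ D(M_f) = H¹(ℝ) ∩ {ψ : fψ ∈ L²}` is the zero subspace. -/
theorem nowhere_L2_multiplier_kills_momentum_domain
    (f : ℝ → ENNReal) (hf : Measurable f)
    (hf2 : ∀ a b : ℝ, a < b → ∫⁻ x in Set.Ioc a b, (f x) ^ 2 ∂volume = ⊤) :
    (∀ ψ : ℝ → ℂ, Continuous ψ →
      (∫⁻ x : ℝ, (f x * (‖ψ x‖₊ : ENNReal)) ^ 2 ∂volume) < ⊤ → ψ = 0) ∧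
    ∀ (P : L2R →ₗ.[ℂ] L2R), IsMomentum P →
      ∀ g : L2R, g ∈ P.domain →
        (∫⁻ x : ℝ, (f x * (‖g x‖₊ : ENNReal)) ^ 2 ∂volume) < ⊤ → g = 0 := by
  have hcont (ψ : ℝ → ℂ) (hψ : Continuous ψ)
      (hfψ : (∫⁻ x : ℝ, (f x * (‖ψ x‖₊ : ENNReal)) ^ 2 ∂volume) < ⊤) : ψ = 0 :=
    eq_zero_of_continuous_of_lintegral_mul_sq_lt_top hf2 hψ hfψ
  refine ⟨hcont, fun P hP g hg hfg ↦ ?_⟩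
  obtain ⟨g', hg'⟩ := LinearPMap.mem_domain_iff.1 hg
  have hweak := (hP g g').1 hg'
  have hloc (k : L2R) : LocallyIntegrable k := (Lp.memLp k).locallyIntegrable (by norm_num)
  obtain ⟨v, hv, hgv⟩ := exists_continuous_ae_eq_of_weakDeriv (hloc g) ((hloc g').smul I) hweak
  have hv0 : v = 0 := by
    refine hcont v hv (lt_of_eq_of_lt (lintegral_congr_ae ?_) hfg)
    filter_upwards [hgv] with x hx
    rw [hx]
  rw [Lp.eq_zero_iff_ae_eq_zero]
  rwa [hv0] at hgv
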